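/- Let γ=(B,M,S,A,Â) be a market with middlemen. Then the associated middlemen matching market game v_γ is balanced: Core(v_γ) is nonempty. -/

import Mathlib

/-!
Matching markets with middlemen (Atay, Bahel, Solymosi).

Players are of three sorts: buyers `B`, middlemen `M`, sellers `S`
(three disjoint nonempty finite types); the player set is `Player B M S = B ⊕ M ⊕ S`.
An (functional representation of a) `T`-matching assigns to each buyer either nothing
(the buyer is single), a seller (direct trade), or a middleman together with a seller
(mediated trade); distinct buyers get distinct sellers, and all agents involved lie in `T`.
A middleman may mediate several trades.
-/

open scoped Classical

noncomputable section

/-- The set of players of a market with middlemen: buyers `B`, middlemen `M`, sellers `S`. -/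
abbrev Player (B M S : Type*) := B ⊕ M ⊕ S

/-- Functional representation of a matching in the market with middlemen: each buyer is
unmatched (`none`), matched directly to a seller (`some (none, k)`), or matched to a seller
through a middleman (`some (some j, k)`). -/
abbrev MMatch (B M S : Type*) := B → Option (Option M × S)

namespace Middlemen

variable {B M S : Type*}

/-- A buyer as a player. -/
def buyer (i : B) : Player B M S := Sum.inl i

/-- A middleman as a player. -/
def mid (j : M) : Player B M S := Sum.inr (Sum.inl j)

/-- A seller as a player. -/
def seller (k : S) : Player B M S := Sum.inr (Sum.inr k)

/-- `f` is a `T`-matching in the market with middlemen: every basic coalition used by `f`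
is contained in `T` and no seller is matched to two distinct buyers.  (Buyers, middlemen
and sellers of `T` not appearing in any trade are singletons of the matching.) -/
def IsMatching (T : Finset (Player B M S)) (f : MMatch B M S) : Prop :=
  (∀ i o k, f i = some (o, k) →
      buyer i ∈ T ∧ seller k ∈ T ∧ ∀ j, o = some j → mid j ∈ T) ∧
  (∀ i i' o o' k, f i = some (o, k) → f i' = some (o', k) → i = i')

variable [Fintype B] [Fintype M] [Fintype S]

/-- The value `Σ_{(i,k)∈μ} a_{ik} + Σ_{(i,j,k)∈μ} â_{ijk}` of a matching in the market
with middlemen with direct-trade surplus matrix `A` and mediated-trade surpluses `Ah`. -/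
def mval (A : B → S → ℝ) (Ah : B → M → S → ℝ) (f : MMatch B M S) : ℝ :=
  ∑ i, (match f i with
    | none => 0
    | some (none, k) => A i k
    | some (some j, k) => Ah i j k)

/-- The TU game `v_γ` associated with the market with middlemen `γ = (B,M,S,A,Ah)`:
the worth of a coalition `T` is the maximal value of a `T`-matching. -/
def vGame (A : B → S → ℝ) (Ah : B → M → S → ℝ) (T : Finset (Player B M S)) : ℝ :=
  sSup { r | ∃ f : MMatch B M S, IsMatching T f ∧ r = mval A Ah f }

/-- `g` is a matching of the coalition `R` in a two-sided assignment market. -/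
def IsMatching2 (R : Finset (B ⊕ S)) (g : B → Option S) : Prop :=
  (∀ i k, g i = some k → Sum.inl i ∈ R ∧ Sum.inr k ∈ R) ∧
  (∀ i i' k, g i = some k → g i' = some k → i = i')

/-- The value of a two-sided matching with valuation matrix `As`. -/
def m2val (As : B → S → ℝ) (g : B → Option S) : ℝ :=
  ∑ i, (match g i with
    | none => 0
    | some k => As i k)

/-- The assignment game `w_{γ*}` of the two-sided assignment market `(B,S,As)`. -/
def wGame (As : B → S → ℝ) (R : Finset (B ⊕ S)) : ℝ :=
  sSup { r | ∃ g : B → Option S, IsMatching2 R g ∧ r = m2val As g }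

/-- The matrix `A*` of the associated two-sided assignment market:
`a*_{ik} = max_{j ∈ M} â_{ijk}`. -/
def Astar [Nonempty M] (Ah : B → M → S → ℝ) (i : B) (k : S) : ℝ :=
  Finset.univ.sup' Finset.univ_nonempty fun j => Ah i j k

/-- The two-sided matching `μ*` induced by a matching `μ` of the market with middlemen:
keep all matched buyer–seller pairs (dropping the middlemen). -/
def star (f : MMatch B M S) : B → Option S := fun i => (f i).map Prod.snd

/-- `m(i,k)`: the lowest-indexed middleman `j` maximizing `â_{ijk}`. -/
def bestMid [Nonempty M] [LinearOrder M] (Ah : B → M → S → ℝ) (i : B) (k : S) : M :=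
  (Finset.univ.filter fun j => ∀ j' : M, Ah i j' k ≤ Ah i j k).min' (by
    obtain ⟨j, -, hj⟩ := Finset.exists_max_image (Finset.univ : Finset M)
      (fun j => Ah i j k) Finset.univ_nonempty
    exact ⟨j, Finset.mem_filter.mpr ⟨Finset.mem_univ _, fun j' => hj j' (Finset.mem_univ _)⟩⟩)

/-- The matching `σ^△` of the market with middlemen induced by a two-sided matching `σ`:
each matched pair `{i,k}` of `σ` trades through the best middleman `m(i,k)`
(and every other middleman is a singleton). -/
def triangle [Nonempty M] [LinearOrder M] (Ah : B → M → S → ℝ) (g : B → Option S) :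
    MMatch B M S :=
  fun i => (g i).map fun k => (some (bestMid Ah i k), k)

/-- The core of a TU game on the finite player set `P`. -/
def core {P : Type*} [Fintype P] (v : Finset P → ℝ) : Set (P → ℝ) :=
  { x | ∑ t, x t = v Finset.univ ∧ ∀ T : Finset P, v T ≤ ∑ t ∈ T, x t }

/-- Augment a payoff vector of the two-sided market with zero payoffs to all middlemen. -/
def aug (xz : B ⊕ S → ℝ) : Player B M S → ℝ := fun t =>
  match t with
  | Sum.inl i => xz (Sum.inl i)
  | Sum.inr (Sum.inl _) => 0
  | Sum.inr (Sum.inr k) => xz (Sum.inr k)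

/-- Restrict a payoff vector of the market with middlemen to the buyers and sellers. -/
def restrictBS (X : Player B M S → ℝ) : B ⊕ S → ℝ := fun t =>
  match t with
  | Sum.inl i => X (buyer i)
  | Sum.inr k => X (seller k)

/-- The set `T ∩ (B ∪ S)` of buyers and sellers of a coalition `T`. -/
def bsPart (T : Finset (Player B M S)) : Finset (B ⊕ S) :=
  Finset.univ.filter fun t =>
    match t with
    | Sum.inl i => buyer i ∈ T
    | Sum.inr k => (seller k : Player B M S) ∈ T

/-- The coalition `R ∪ M` consisting of the buyers and sellers of `R` together with
all middlemen. -/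
def withAllMid (R : Finset (B ⊕ S)) : Finset (Player B M S) :=
  Finset.univ.filter fun t =>
    match t with
    | Sum.inl i => Sum.inl i ∈ R
    | Sum.inr (Sum.inl _) => True
    | Sum.inr (Sum.inr k) => Sum.inr k ∈ R

end Middlemen

namespace Middlemen

/-!
Direct trade is mediated trade through a dummy middleman, so only the best way `o : Option M` of
carrying out a trade between `i` and `k` matters, and middlemen, who are not rationed, can be paid
nothing: a core payoff of the two-sided assignment game on the best surpluses, extended by zero, is
a core payoff of the market with middlemen.

The core of the assignment game is nonempty by Egerváry's duality: for a square matrix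
`c`, take `(u, w)` of least total with `c p q ≤ u p + w q`. If some set `X` of rows had fewer than
`#X` tight columns (`c p q = u p + w q` for some `p ∈ X`), then lowering `u` on `X` and raising `w`
on these columns by a small `ε` would give a smaller total; so Hall's theorem provides a permutation
along which `u p + w q = c p q`. Rectangular matrices with entries of any sign are padded by zeros.
-/

section Duality

variable {P Q : Type*} {c : P → Q → ℝ} {u : P → ℝ} {w : Q → ℝ}

/-- `(u, w)` is a weighted cover of the matrix `c`, i.e. a feasible solution of the linear program
dual to the assignment problem for `c`, without sign constraints. -/
def IsCover (c : P → Q → ℝ) (u : P → ℝ) (w : Q → ℝ) : Prop :=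
  ∀ p q, c p q ≤ u p + w q

/-- `(u, w)` is an optimal solution of the dual assignment problem: a cover of least total weight
among all covers, whatever their signs. -/
def IsMinCover [Fintype P] [Fintype Q] (c : P → Q → ℝ) (u : P → ℝ) (w : Q → ℝ) : Prop :=
  IsCover c u w ∧
    ∀ u' w', IsCover c u' w' → ∑ p, u p + ∑ q, w q ≤ ∑ p, u' p + ∑ q, w' q

lemma IsCover.min_const {C : ℝ} (h : IsCover c u w) (hu : 0 ≤ u) (hw : 0 ≤ w)
    (hC0 : 0 ≤ C) (hC : ∀ p q, c p q ≤ C) :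
    IsCover c (fun p => min (u p) C) (fun q => min (w q) C) := by
  intro p q
  have hpq := h p q
  have hCpq := hC p q
  have hup : 0 ≤ u p := hu p
  have hwq : 0 ≤ w q := hw q
  dsimp only
  rcases min_cases (u p) C with hmin | hmin <;> rcases min_cases (w q) C with hmin' | hmin' <;>
    linarith

lemma isClosed_setOf_isCover (c : P → Q → ℝ) :
    IsClosed {z : (P → ℝ) × (Q → ℝ) | IsCover c z.1 z.2} := by
  simp only [IsCover, Set.ofPred_forall]
  exact isClosed_iInter fun p => isClosed_iInter fun q => isClosed_le (by fun_prop) (by fun_prop)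

lemma exists_nonneg_isCover_forall_sum_le [Fintype P] [Fintype Q] (c : P → Q → ℝ) :
    ∃ u w, 0 ≤ u ∧ 0 ≤ w ∧ IsCover c u w ∧ ∀ u' w', 0 ≤ u' → 0 ≤ w' → IsCover c u' w' →
      ∑ p, u p + ∑ q, w q ≤ ∑ p, u' p + ∑ q, w' q := by
  obtain ⟨C, hC0, hC⟩ : ∃ C : ℝ, 0 ≤ C ∧ ∀ p q, c p q ≤ C := by
    obtain ⟨C, hC⟩ := (Set.finite_range fun z : P × Q => c z.1 z.2).bddAbove
    exact ⟨max C 0, le_max_right _ _, fun p q => le_max_of_le_left (hC ⟨(p, q), rfl⟩)⟩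
  let box : Set ((P → ℝ) × (Q → ℝ)) := Set.Icc 0 (fun _ => C, fun _ => C)
  have h_compact : IsCompact (box ∩ {z | IsCover c z.1 z.2}) :=
    isCompact_Icc.inter_right (isClosed_setOf_isCover c)
  have h_nonempty : (box ∩ {z | IsCover c z.1 z.2}).Nonempty :=
    ⟨(fun _ => C, fun _ => C), ⟨⟨fun _ => hC0, fun _ => hC0⟩, le_rfl⟩,
      fun p q => (hC p q).trans (le_add_of_nonneg_right hC0)⟩
  obtain ⟨⟨u, w⟩, ⟨⟨⟨hu, hw⟩, -⟩, h_cover⟩, h_min⟩ := h_compact.exists_isMinOn h_nonempty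
    (f := fun z => ∑ p, z.1 p + ∑ q, z.2 q) (by fun_prop)
  refine ⟨u, w, hu, hw, h_cover, fun u' w' hu' hw' h' => ?_⟩
  calc ∑ p, u p + ∑ q, w q
      ≤ ∑ p, min (u' p) C + ∑ q, min (w' q) C :=
        h_min (a := (fun p => min (u' p) C, fun q => min (w' q) C))
          ⟨⟨⟨fun p => le_min (hu' p) hC0, fun q => le_min (hw' q) hC0⟩,
            fun _ => min_le_right _ _, fun _ => min_le_right _ _⟩, h'.min_const hu' hw' hC0 hC⟩
    _ ≤ ∑ p, u' p + ∑ q, w' q := by gcongr <;> exact min_le_left _ _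

lemma IsCover.exists_nonneg_sum_eq [Fintype P] {c : P → P → ℝ} {u w : P → ℝ}
    (h : IsCover c u w) (hc : ∀ p q, 0 ≤ c p q) :
    ∃ u' w', 0 ≤ u' ∧ 0 ≤ w' ∧ IsCover c u' w' ∧
      ∑ p, u' p + ∑ q, w' q = ∑ p, u p + ∑ q, w q := by
  cases isEmpty_or_nonempty P
  · exact ⟨u, w, isEmptyElim, isEmptyElim, h, rfl⟩
  obtain ⟨q₀, hq₀⟩ := Finite.exists_min w
  refine ⟨fun p => u p + w q₀, fun q => w q - w q₀, fun p => (hc p q₀).trans (h p q₀),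
    fun q => sub_nonneg.2 (hq₀ q), fun p q => by linarith [h p q], ?_⟩
  simp only [Finset.sum_add_distrib, Finset.sum_sub_distrib]
  ring

lemma exists_nonneg_isMinCover [Fintype P] {c : P → P → ℝ} (hc : ∀ p q, 0 ≤ c p q) :
    ∃ u w, 0 ≤ u ∧ 0 ≤ w ∧ IsMinCover c u w := by
  obtain ⟨u, w, hu, hw, h_cover, h_min⟩ := exists_nonneg_isCover_forall_sum_le c
  refine ⟨u, w, hu, hw, h_cover, fun u' w' h' => ?_⟩
  obtain ⟨u'', w'', hu'', hw'', h'', h_sum⟩ := h'.exists_nonneg_sum_eq hc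
  exact (h_min u'' w'' hu'' hw'' h'').trans_eq h_sum

lemma exists_pos_forall_le_of_pos {ι : Type*} [Finite ι] (f : ι → ℝ) :
    ∃ ε > 0, ∀ i, 0 < f i → ε ≤ f i := by
  cases isEmpty_or_nonempty {i // 0 < f i} with
  | inl h => exact ⟨1, one_pos, fun i hi => (h.false ⟨i, hi⟩).elim⟩
  | inr _ =>
    obtain ⟨i₀, hi₀⟩ := Finite.exists_min fun i : {i // 0 < f i} => f i
    exact ⟨f i₀, i₀.2, fun i hi => hi₀ ⟨i, hi⟩⟩

lemma IsCover.sub_add_indicator (h : IsCover c u w) {ε : ℝ} (hε : 0 ≤ ε)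
    (h_slack : ∀ p q, 0 < u p + w q - c p q → ε ≤ u p + w q - c p q) {X : Finset P} {Y : Finset Q}
    (hXY : ∀ p ∈ X, ∀ q, u p + w q = c p q → q ∈ Y) :
    IsCover c (fun p => u p - if p ∈ X then ε else 0) (fun q => w q + if q ∈ Y then ε else 0) := by
  intro p q
  have hpq := h p q
  by_cases hp : p ∈ X <;> by_cases hq : q ∈ Y <;> simp only [hp, hq, if_true, if_false]
  case neg =>
    have h_not_tight : c p q ≠ u p + w q := fun h_tight => hq (hXY p hp q h_tight.symm)
    linarith [h_slack p q (sub_pos.2 (hpq.lt_of_ne h_not_tight))]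
  all_goals linarith

variable [Fintype P] [Fintype Q]

lemma IsMinCover.card_le_card_tight (h : IsMinCover c u w) (X : Finset P) :
    X.card ≤ (Finset.univ.filter fun q => ∃ p ∈ X, u p + w q = c p q).card := by
  set Y : Finset Q := Finset.univ.filter fun q => ∃ p ∈ X, u p + w q = c p q
  obtain ⟨ε, hε, h_slack⟩ := exists_pos_forall_le_of_pos fun z : P × Q => u z.1 + w z.2 - c z.1 z.2
  have h_le := h.2 _ _ <| h.1.sub_add_indicator (X := X) (Y := Y) hε.le
    (fun p q => h_slack (p, q))
    (fun p hp q h_tight => Finset.mem_filter.2 ⟨Finset.mem_univ q, p, hp, h_tight⟩)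
  simp only [Finset.sum_sub_distrib, Finset.sum_add_distrib, Finset.sum_ite_mem,
    Finset.univ_inter, Finset.sum_const, nsmul_eq_mul] at h_le
  have h_mul : (X.card : ℝ) * ε ≤ Y.card * ε := by linarith
  exact_mod_cast le_of_mul_le_mul_right h_mul hε

lemma IsMinCover.exists_injective_tight (h : IsMinCover c u w) :
    ∃ σ : P → Q, σ.Injective ∧ ∀ p, u p + w (σ p) = c p (σ p) :=
  (Fintype.all_card_le_filter_rel_iff_exists_injective _).1 h.card_le_card_tight

theorem exists_nonneg_isCover_sum_eq_sum_perm {c : P → P → ℝ} (hc : ∀ p q, 0 ≤ c p q) :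
    ∃ (u w : P → ℝ) (σ : Equiv.Perm P), 0 ≤ u ∧ 0 ≤ w ∧ IsCover c u w ∧
      ∑ p, u p + ∑ q, w q = ∑ p, c p (σ p) := by
  obtain ⟨u, w, hu, hw, h_min⟩ := exists_nonneg_isMinCover hc
  obtain ⟨σ, hσ, h_tight⟩ := h_min.exists_injective_tight
  refine ⟨u, w, .ofBijective σ hσ.bijective_of_finite, hu, hw, h_min.1, ?_⟩
  calc ∑ p, u p + ∑ q, w q
      = ∑ p, (u p + w (σ p)) := by
        rw [Finset.sum_add_distrib, hσ.bijective_of_finite.sum_comp w]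
    _ = ∑ p, c p (σ p) := Finset.sum_congr rfl fun p _ => h_tight p

end Duality

section AssignmentGame

variable {B S : Type*}

/-- The square matrix on `B ⊕ S` obtained from the positive part of `a` by adding dummy buyers
(indexed by `S`) and dummy sellers (indexed by `B`), whose trades are worth zero. -/
def padded (a : B → S → ℝ) : B ⊕ S → B ⊕ S → ℝ
  | .inl i, .inr k => max (a i k) 0
  | _, _ => 0

/-- The two-sided matching read off a permutation of the padded market: trades with dummies and
trades without positive surplus are dropped. -/
def profitablePart (a : B → S → ℝ) (σ : Equiv.Perm (B ⊕ S)) (i : B) : Option S :=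
  (σ (.inl i)).getRight?.filter fun k => 0 < a i k

/-- The buyer–seller pair of the matching `g` that contains the buyer `i`, or `∅` if `i` is
single. -/
def tradingPair (g : B → Option S) (i : B) : Finset (B ⊕ S) :=
  (g i).elim ∅ fun k => {.inl i, .inr k}

lemma padded_nonneg (a : B → S → ℝ) : ∀ p q, 0 ≤ padded a p q
  | .inl _, .inr _ => le_max_right _ _
  | .inl _, .inl _ | .inr _, .inl _ | .inr _, .inr _ => le_rfl

lemma eq_of_inl_mem_tradingPair {g : B → Option S} {i i' : B} (h : .inl i' ∈ tradingPair g i) :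
    i' = i := by
  rcases hi : g i with _ | k <;> simp_all [tradingPair]

lemma inr_mem_tradingPair {g : B → Option S} {i : B} {k : S} :
    .inr k ∈ tradingPair g i ↔ g i = some k := by
  rcases hi : g i with _ | k' <;> simp [tradingPair, hi, eq_comm]

lemma IsMatching2.pairwiseDisjoint_tradingPair {R : Finset (B ⊕ S)} {g : B → Option S}
    (hg : IsMatching2 R g) (I : Set B) : I.PairwiseDisjoint (tradingPair g) := by
  intro i _ i' _ hne
  refine Finset.disjoint_left.2 ?_
  rintro (b | k) hi hi'
  · exact hne ((eq_of_inl_mem_tradingPair hi).symm.trans (eq_of_inl_mem_tradingPair hi'))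
  · exact hne (hg.2 i i' k (inr_mem_tradingPair.1 hi) (inr_mem_tradingPair.1 hi'))

lemma IsMatching2.tradingPair_subset {R : Finset (B ⊕ S)} {g : B → Option S}
    (hg : IsMatching2 R g) (i : B) : tradingPair g i ⊆ R := by
  rcases hi : g i with _ | k
  · simp [tradingPair, hi]
  · simpa [tradingPair, hi, Finset.insert_subset_iff] using hg.1 i k hi

variable [Fintype B]

lemma m2val_eq_sum (a : B → S → ℝ) (g : B → Option S) :
    m2val a g = ∑ i, (g i).elim 0 (a i) := by
  refine Finset.sum_congr rfl fun i _ => ?_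
  rcases g i with _ | k <;> rfl

lemma IsMatching2.m2val_le_sum {a : B → S → ℝ} {u : B → ℝ} {w : S → ℝ} (h : IsCover a u w)
    (hu : 0 ≤ u) (hw : 0 ≤ w) {R : Finset (B ⊕ S)} {g : B → Option S} (hg : IsMatching2 R g) :
    m2val a g ≤ ∑ t ∈ R, Sum.elim u w t := by
  have h_nonneg : ∀ t, 0 ≤ Sum.elim u w t := Sum.rec hu hw
  calc m2val a g
      ≤ ∑ i, ∑ t ∈ tradingPair g i, Sum.elim u w t := by
        refine Finset.sum_le_sum fun i _ => ?_
        rcases hi : g i with _ | k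
        · simp [tradingPair, hi]
        · simpa [tradingPair, hi] using h i k
    _ = ∑ t ∈ Finset.univ.biUnion (tradingPair g), Sum.elim u w t :=
        (Finset.sum_biUnion (hg.pairwiseDisjoint_tradingPair _)).symm
    _ ≤ ∑ t ∈ R, Sum.elim u w t :=
        Finset.sum_le_sum_of_subset_of_nonneg
          (Finset.biUnion_subset.2 fun i _ => hg.tradingPair_subset i) fun t _ _ => h_nonneg t

lemma wGame_le {a : B → S → ℝ} {R : Finset (B ⊕ S)} {r : ℝ}
    (h : ∀ g, IsMatching2 R g → m2val a g ≤ r) : wGame a R ≤ r := by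
  refine csSup_le ⟨_, fun _ => none, ⟨by simp, by simp⟩, rfl⟩ ?_
  rintro _ ⟨g, hg, rfl⟩
  exact h g hg

lemma IsMatching2.m2val_le_wGame [Finite S] (a : B → S → ℝ) {R : Finset (B ⊕ S)} {g : B → Option S}
    (hg : IsMatching2 R g) : m2val a g ≤ wGame a R := by
  refine le_csSup ((Set.finite_range (m2val a)).subset ?_).bddAbove ⟨g, hg, rfl⟩
  rintro _ ⟨g', -, rfl⟩
  exact ⟨g', rfl⟩

variable [Fintype S]

lemma isMatching2_profitablePart (a : B → S → ℝ) (σ : Equiv.Perm (B ⊕ S)) :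
    IsMatching2 Finset.univ (profitablePart a σ) := by
  refine ⟨fun _ _ _ => ⟨Finset.mem_univ _, Finset.mem_univ _⟩, fun i i' k hi hi' => ?_⟩
  simp only [profitablePart, Option.filter_eq_some_iff, Sum.getRight?_eq_some_iff] at hi hi'
  exact Sum.inl_injective (σ.injective (hi.1.trans hi'.1.symm))

lemma m2val_profitablePart (a : B → S → ℝ) (σ : Equiv.Perm (B ⊕ S)) :
    m2val a (profitablePart a σ) = ∑ p, padded a p (σ p) := by
  have h_dummy (k : S) (q : B ⊕ S) : padded a (.inr k) q = 0 := rfl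
  simp only [m2val_eq_sum, Fintype.sum_sum_type, h_dummy, Finset.sum_const_zero, add_zero]
  refine Finset.sum_congr rfl fun i _ => ?_
  rcases hi : σ (.inl i) with i' | k
  · simp [profitablePart, padded, hi]
  · by_cases h_pos : 0 < a i k
    · simp [profitablePart, padded, hi, Option.filter_some, h_pos, h_pos.le]
    · simp [profitablePart, padded, hi, Option.filter_some, h_pos, not_lt.1 h_pos]

theorem exists_nonneg_isCover_sum_le_m2val (a : B → S → ℝ) :
    ∃ (u : B → ℝ) (w : S → ℝ) (g : B → Option S), 0 ≤ u ∧ 0 ≤ w ∧ IsCover a u w ∧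
      IsMatching2 Finset.univ g ∧ ∑ i, u i + ∑ k, w k ≤ m2val a g := by
  obtain ⟨u, w, σ, hu, hw, h_cover, h_sum⟩ :=
    exists_nonneg_isCover_sum_eq_sum_perm (padded_nonneg a)
  refine ⟨u ∘ .inl, w ∘ .inr, profitablePart a σ, fun i => hu (.inl i), fun k => hw (.inr k),
    fun i k => (le_max_left _ _).trans (h_cover (.inl i) (.inr k)),
    isMatching2_profitablePart a σ, ?_⟩
  rw [m2val_profitablePart, ← h_sum, Fintype.sum_sum_type, Fintype.sum_sum_type]
  have hu_dummy : 0 ≤ ∑ k, u (.inr k) := Finset.sum_nonneg fun k _ => hu (.inr k)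
  have hw_dummy : 0 ≤ ∑ i, w (.inl i) := Finset.sum_nonneg fun i _ => hw (.inl i)
  simp only [Function.comp_apply]
  linarith

theorem core_wGame_nonempty (a : B → S → ℝ) : (core (wGame a)).Nonempty := by
  obtain ⟨u, w, g, hu, hw, h_cover, hg, h_sum⟩ := exists_nonneg_isCover_sum_le_m2val a
  have h_stable (R : Finset (B ⊕ S)) : wGame a R ≤ ∑ t ∈ R, Sum.elim u w t :=
    wGame_le fun _ hg' => hg'.m2val_le_sum h_cover hu hw
  refine ⟨Sum.elim u w, le_antisymm ?_ (h_stable _), h_stable⟩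
  simpa using h_sum.trans (hg.m2val_le_wGame a)

end AssignmentGame

section MiddlemenGame

variable {B M S : Type*} {A : B → S → ℝ} {Ah : B → M → S → ℝ}

/-- The surplus of the trade between `i` and `k` carried out by `o`, where `none` stands for direct
trade. -/
def surplus (A : B → S → ℝ) (Ah : B → M → S → ℝ) (i : B) (k : S) (o : Option M) : ℝ :=
  o.elim (A i k) fun j => Ah i j k

/-- The best surplus a buyer and a seller can generate, directly or through a middleman: the
analogue of `Astar` when direct trade may beat mediated trade. -/
def bestSurplus [Fintype M] (A : B → S → ℝ) (Ah : B → M → S → ℝ) (i : B) (k : S) : ℝ :=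
  Finset.univ.sup' Finset.univ_nonempty (surplus A Ah i k)

lemma surplus_le_bestSurplus [Fintype M] (i : B) (k : S) (o : Option M) :
    surplus A Ah i k o ≤ bestSurplus A Ah i k :=
  Finset.le_sup' _ (Finset.mem_univ o)

lemma exists_surplus_eq_bestSurplus [Fintype M] (A : B → S → ℝ) (Ah : B → M → S → ℝ)
    (i : B) (k : S) : ∃ o, surplus A Ah i k o = bestSurplus A Ah i k := by
  obtain ⟨o, -, ho⟩ := Finset.exists_mem_eq_sup' Finset.univ_nonempty (surplus A Ah i k)
  exact ⟨o, ho.symm⟩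

lemma star_eq_some_iff {f : MMatch B M S} {i : B} {k : S} :
    star f i = some k ↔ ∃ o, f i = some (o, k) := by
  simp [star]

lemma inl_mem_bsPart [Fintype B] [Fintype S] {T : Finset (Player B M S)} {i : B} :
    .inl i ∈ bsPart T ↔ buyer i ∈ T := by
  simp [bsPart]

lemma inr_mem_bsPart [Fintype B] [Fintype S] {T : Finset (Player B M S)} {k : S} :
    .inr k ∈ bsPart T ↔ seller k ∈ T := by
  simp [bsPart]

lemma IsMatching.isMatching2_star [Fintype B] [Fintype S] {T : Finset (Player B M S)}
    {f : MMatch B M S} (hf : IsMatching T f) : IsMatching2 (bsPart T) (star f) := by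
  refine ⟨fun i k h => ?_, fun i i' k h h' => ?_⟩
  · obtain ⟨o, ho⟩ := star_eq_some_iff.1 h
    obtain ⟨hi, hk, -⟩ := hf.1 i o k ho
    exact ⟨inl_mem_bsPart.2 hi, inr_mem_bsPart.2 hk⟩
  · obtain ⟨o, ho⟩ := star_eq_some_iff.1 h
    obtain ⟨o', ho'⟩ := star_eq_some_iff.1 h'
    exact hf.2 i i' o o' k ho ho'

lemma IsMatching2.isMatching_univ_map [Fintype B] [Fintype M] [Fintype S] {R : Finset (B ⊕ S)}
    {g : B → Option S} (hg : IsMatching2 R g) (o : B → S → Option M) :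
    IsMatching Finset.univ fun i => (g i).map fun k => (o i k, k) := by
  refine ⟨by simp, fun i i' o₁ o₂ k h h' => hg.2 i i' k ?_ ?_⟩ <;> aesop

lemma bsPart_univ [Fintype B] [Fintype M] [Fintype S] :
    bsPart (Finset.univ : Finset (Player B M S)) = Finset.univ := by
  ext (i | k) <;> simp [inl_mem_bsPart, inr_mem_bsPart]

lemma sum_aug [Fintype B] [Fintype S] (x : B ⊕ S → ℝ) (T : Finset (Player B M S)) :
    ∑ t ∈ T, aug x t = ∑ t ∈ bsPart T, x t := by
  refine (Finset.sum_of_injOn (Sum.map id Sum.inr) ?_ ?_ ?_ ?_).symm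
  · exact (Function.injective_id.sumMap Sum.inr_injective).injOn
  · exact Sum.rec (fun _ => inl_mem_bsPart.1) fun _ => inr_mem_bsPart.1
  · rintro (i | j | k) ht h_notMem
    · exact (h_notMem ⟨.inl i, inl_mem_bsPart.2 ht, rfl⟩).elim
    · rfl
    · exact (h_notMem ⟨.inr k, inr_mem_bsPart.2 ht, rfl⟩).elim
  · rintro (i | k) - <;> rfl

variable [Fintype B]

lemma mval_eq_sum_surplus (A : B → S → ℝ) (Ah : B → M → S → ℝ) (f : MMatch B M S) :
    mval A Ah f = ∑ i, (f i).elim 0 fun z => surplus A Ah i z.2 z.1 := by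
  refine Finset.sum_congr rfl fun i _ => ?_
  rcases f i with _ | ⟨_ | j, k⟩ <;> rfl

lemma vGame_le {T : Finset (Player B M S)} {r : ℝ}
    (h : ∀ f, IsMatching T f → mval A Ah f ≤ r) : vGame A Ah T ≤ r := by
  refine csSup_le ⟨_, fun _ => none, ⟨by simp, by simp⟩, rfl⟩ ?_
  rintro _ ⟨f, hf, rfl⟩
  exact h f hf

lemma IsMatching.mval_le_vGame [Finite M] [Finite S] (A : B → S → ℝ) (Ah : B → M → S → ℝ)
    {T : Finset (Player B M S)} {f : MMatch B M S} (hf : IsMatching T f) :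
    mval A Ah f ≤ vGame A Ah T := by
  refine le_csSup ((Set.finite_range (mval A Ah)).subset ?_).bddAbove ⟨f, hf, rfl⟩
  rintro _ ⟨f', -, rfl⟩
  exact ⟨f', rfl⟩

variable [Fintype M]

lemma mval_le_m2val_star (f : MMatch B M S) :
    mval A Ah f ≤ m2val (bestSurplus A Ah) (star f) := by
  rw [mval_eq_sum_surplus, m2val_eq_sum]
  refine Finset.sum_le_sum fun i _ => ?_
  rcases hi : f i with _ | ⟨o, k⟩
  · simp [star, hi]
  · simpa [star, hi] using surplus_le_bestSurplus i k o

variable [Fintype S]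

lemma vGame_le_wGame_bsPart (A : B → S → ℝ) (Ah : B → M → S → ℝ) (T : Finset (Player B M S)) :
    vGame A Ah T ≤ wGame (bestSurplus A Ah) (bsPart T) :=
  vGame_le fun f hf => (mval_le_m2val_star f).trans (hf.isMatching2_star.m2val_le_wGame _)

lemma wGame_univ_le_vGame_univ (A : B → S → ℝ) (Ah : B → M → S → ℝ) :
    wGame (bestSurplus A Ah) Finset.univ ≤ vGame A Ah Finset.univ := by
  choose o ho using exists_surplus_eq_bestSurplus A Ah
  refine wGame_le fun g hg => ?_
  calc m2val (bestSurplus A Ah) g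
      = mval A Ah fun i => (g i).map fun k => (o i k, k) := by
        simp [m2val_eq_sum, mval_eq_sum_surplus, Option.elim_map, Function.comp_def, ho]
    _ ≤ vGame A Ah Finset.univ := (hg.isMatching_univ_map o).mval_le_vGame A Ah

theorem aug_mem_core_vGame {x : B ⊕ S → ℝ} (hx : x ∈ core (wGame (bestSurplus A Ah))) :
    aug x ∈ core (vGame A Ah) := by
  obtain ⟨h_total, h_stable⟩ := hx
  have h_stable_aug (T : Finset (Player B M S)) : vGame A Ah T ≤ ∑ t ∈ T, aug x t := by
    rw [sum_aug]
    exact (vGame_le_wGame_bsPart A Ah T).trans (h_stable _)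
  refine ⟨le_antisymm ?_ (h_stable_aug _), h_stable_aug⟩
  rw [sum_aug, bsPart_univ, h_total]
  exact wGame_univ_le_vGame_univ A Ah

theorem core_nonempty_general (A : B → S → ℝ) (Ah : B → M → S → ℝ) :
    (core (vGame A Ah)).Nonempty :=
  let ⟨_, hx⟩ := core_wGame_nonempty (bestSurplus A Ah)
  ⟨_, aug_mem_core_vGame hx⟩

end MiddlemenGame

/-- the middlemen matching market game `v_γ` is balanced:
its core is nonempty. -/
theorem core_nonempty
    {B M S : Type*} [Fintype B] [Fintype M] [Fintype S]
    [Nonempty B] [Nonempty M] [Nonempty S]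
    (A : B → S → ℝ) (Ah : B → M → S → ℝ)
    (hA : ∀ i k, 0 ≤ A i k) (hAh : ∀ i j k, A i k ≤ Ah i j k) :
    (core (vGame A Ah)).Nonempty :=
  core_nonempty_general A Ah

end Middlemen
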